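/- Let f be a Rademacher random multiplicative function, let x ≥ 4, and set 𝓕(√x) := σ({f(p) : p prime, p ≤ √x}), M_f(x) := ∑_{n ≤ x, P(n) > √x} f(n), and V(x) := ∑_{√x < p ≤ x, p prime} (∑_{m ≤ x/p} f(m))². Then for any λ > 0, almost surely the conditional probability satisfies ℙ(|M_f(x)| ≥ λ | 𝓕(√x)) ≤ 2·exp(−λ²/(2·V(x))), where on the event {V(x) = 0} the left-hand side vanishes. -/

import Mathlib

open MeasureTheory ProbabilityTheory

noncomputable section

/-- The largest prime factor of `n`, with `P 1 = 1` (and `P 0 = 1`). -/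
def Pfac (n : ℕ) : ℕ := if n ≤ 1 then 1 else n.primeFactors.sup id

/-- A Rademacher random multiplicative function. -/
structure IsRademacherRMF {Ω : Type*} [MeasurableSpace Ω] (μ : Measure Ω)
    (f : Ω → ℕ → ℝ) : Prop where
  meas : ∀ n : ℕ, Measurable fun ω => f ω n
  indep : iIndepFun (m := fun _ : Nat.Primes => (inferInstance : MeasurableSpace ℝ))
    (fun (p : Nat.Primes) (ω : Ω) => f ω (p : ℕ)) μ
  prob_one : ∀ p : ℕ, p.Prime → μ {ω | f ω p = 1} = 1 / 2
  prob_neg_one : ∀ p : ℕ, p.Prime → μ {ω | f ω p = -1} = 1 / 2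
  eq_zero_of_not_squarefree : ∀ (ω : Ω) (n : ℕ), ¬Squarefree n → f ω n = 0
  eq_prod_of_squarefree : ∀ (ω : Ω) (n : ℕ), Squarefree n →
    f ω n = ∏ p ∈ n.primeFactors, f ω p

/-- The σ-algebra `𝓕(√x)` generated by `{f(p) : p prime, p ≤ √x}`. -/
def sigmaAlgSqrt {Ω : Type*} (f : Ω → ℕ → ℝ) (x : ℝ) : MeasurableSpace Ω :=
  ⨆ p ∈ {p : ℕ | p.Prime ∧ (p : ℝ) ≤ Real.sqrt x},
    MeasurableSpace.comap (fun ω => f ω p) (inferInstance : MeasurableSpace ℝ)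

/-- `M_f(x) := ∑_{n ≤ x, P(n) > √x} f(n)`. -/
def Mrad {Ω : Type*} (f : Ω → ℕ → ℝ) (ω : Ω) (x : ℝ) : ℝ :=
  ∑ n ∈ (Finset.Icc 1 ⌊x⌋₊).filter (fun n : ℕ => Real.sqrt x < (Pfac n : ℝ)), f ω n

/-- `V(x) := ∑_{√x < p ≤ x} (∑_{m ≤ x/p} f(m))²`. -/
def Vrad {Ω : Type*} (f : Ω → ℕ → ℝ) (ω : Ω) (x : ℝ) : ℝ :=
  ∑ p ∈ (Finset.Icc 1 ⌊x⌋₊).filter (fun p : ℕ => Nat.Prime p ∧ Real.sqrt x < (p : ℝ)),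
    (∑ m ∈ Finset.Icc 1 ⌊x / (p : ℝ)⌋₊, f ω m) ^ 2

lemma Pfac_mul_aux {p m : ℕ} (hp : p.Prime) (hm : 1 ≤ m) (hmp : m < p) : Pfac (p * m) = p := by
  have h2 := hp.two_le
  have h1 : ¬ p * m ≤ 1 := by nlinarith
  rw [Pfac, if_neg h1, Nat.primeFactors_mul hp.ne_zero (by omega), hp.primeFactors,
    Finset.sup_union]
  simp only [Finset.sup_singleton, id]
  apply sup_eq_left.2
  apply Finset.sup_le
  intro q hq
  exact (Nat.le_of_dvd (by omega) (Nat.dvd_of_mem_primeFactors hq)).trans hmp.le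

lemma Pfac_spec {n : ℕ} (hn : ¬ n ≤ 1) : (Pfac n).Prime ∧ Pfac n ∣ n := by
  have hne : n.primeFactors.Nonempty := Nat.nonempty_primeFactors.2 (by omega)
  obtain ⟨q, hq, hq'⟩ := Finset.exists_mem_eq_sup n.primeFactors hne id
  rw [Pfac, if_neg hn, hq']
  exact ⟨Nat.prime_of_mem_primeFactors hq, Nat.dvd_of_mem_primeFactors hq⟩

lemma rmf_mul_aux {Ω : Type*} [MeasurableSpace Ω] {μ : Measure Ω}
    {f : Ω → ℕ → ℝ} (hf : IsRademacherRMF μ f) (ω : Ω) {p m : ℕ} (hp : p.Prime)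
    (hm : 1 ≤ m) (hmp : m < p) : f ω (p * m) = f ω p * f ω m := by
  have hc : Nat.Coprime p m := (Nat.Prime.coprime_iff_not_dvd hp).2
    (fun h => absurd (Nat.le_of_dvd (by omega) h) (by omega))
  by_cases hs : Squarefree m
  · have hs' : Squarefree (p * m) := (Nat.squarefree_mul hc).2 ⟨hp.squarefree, hs⟩
    rw [hf.eq_prod_of_squarefree ω _ hs', hf.eq_prod_of_squarefree ω _ hs,
      Nat.primeFactors_mul hp.ne_zero (by omega), Finset.prod_union hc.disjoint_primeFactors,
      hp.primeFactors, Finset.prod_singleton]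
  · rw [hf.eq_zero_of_not_squarefree ω m hs, mul_zero]
    exact hf.eq_zero_of_not_squarefree ω _ (fun h => hs (h.of_mul_right))

lemma lt_of_le_div_aux {x : ℝ} (hx : 4 ≤ x) {p m : ℕ} (hp : Real.sqrt x < p)
    (hm : m ≤ ⌊x / (p : ℝ)⌋₊) : (m : ℝ) < Real.sqrt x ∧ (p : ℝ) * m ≤ x := by
  have h0 : 0 < Real.sqrt x := Real.sqrt_pos.2 (by linarith)
  have hp0 : (0 : ℝ) < p := h0.trans hp
  have h1 : (m : ℝ) ≤ x / p := (Nat.le_floor_iff (by positivity)).1 hm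
  have h2 : (p : ℝ) * m ≤ x := by
    rw [le_div_iff₀ hp0] at h1; linarith
  refine ⟨?_, h2⟩
  by_contra h
  push Not at h
  have := Real.mul_self_sqrt (show 0 ≤ x by linarith)
  nlinarith

lemma Mrad_eq {Ω : Type*} [MeasurableSpace Ω] {μ : Measure Ω}
    {f : Ω → ℕ → ℝ} (hf : IsRademacherRMF μ f) (ω : Ω) {x : ℝ} (hx : 4 ≤ x) :
    Mrad f ω x =
      ∑ p ∈ (Finset.Icc 1 ⌊x⌋₊).filter (fun p : ℕ => Nat.Prime p ∧ Real.sqrt x < (p : ℝ)),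
        f ω p * ∑ m ∈ Finset.Icc 1 ⌊x / (p : ℝ)⌋₊, f ω m := by
  have hs1 : 1 < Real.sqrt x := by
    rw [Real.lt_sqrt (by norm_num)]; linarith
  simp_rw [Finset.mul_sum]
  rw [Mrad, Finset.sum_sigma']
  refine Finset.sum_nbij' (fun n => ⟨Pfac n, n / Pfac n⟩) (fun q => q.1 * q.2) ?_ ?_ ?_ ?_ ?_
  · intro n hn
    simp only [Finset.mem_filter, Finset.mem_Icc, Finset.mem_sigma] at hn ⊢
    obtain ⟨⟨hn1, hn2⟩, hn3⟩ := hn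
    have hn4 : ¬ n ≤ 1 := by
      intro h
      rw [Pfac, if_pos h] at hn3
      norm_num at hn3
      linarith
    obtain ⟨hP, hd⟩ := Pfac_spec hn4
    have hle := Nat.le_of_dvd (by omega) hd
    refine ⟨⟨⟨hP.one_le, hle.trans hn2⟩, hP, hn3⟩, Nat.div_pos hle hP.pos, ?_⟩
    have hnx : (n : ℝ) ≤ x := (Nat.le_floor_iff (by linarith)).1 hn2
    apply Nat.le_floor
    rw [Nat.cast_div hd (by exact_mod_cast hP.ne_zero)]
    gcongr
  · rintro ⟨p, m⟩ hn
    simp only [Finset.mem_filter, Finset.mem_Icc, Finset.mem_sigma] at hn ⊢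
    obtain ⟨⟨⟨hp1, hp2⟩, hp, hpx⟩, hm1, hm2⟩ := hn
    obtain ⟨h1, h2⟩ := lt_of_le_div_aux hx hpx hm2
    have hmp : m < p := by exact_mod_cast h1.trans hpx
    rw [Pfac_mul_aux hp hm1 hmp]
    refine ⟨⟨Nat.mul_pos hp.pos hm1, Nat.le_floor (by push_cast; exact h2)⟩, hpx⟩
  · intro n hn
    simp only [Finset.mem_filter, Finset.mem_Icc] at hn
    obtain ⟨⟨hn1, hn2⟩, hn3⟩ := hn
    have hn4 : ¬ n ≤ 1 := by
      intro h
      rw [Pfac, if_pos h] at hn3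
      norm_num at hn3
      linarith
    exact Nat.mul_div_cancel' (Pfac_spec hn4).2
  · rintro ⟨p, m⟩ hn
    simp only [Finset.mem_filter, Finset.mem_Icc, Finset.mem_sigma] at hn
    obtain ⟨⟨⟨hp1, hp2⟩, hp, hpx⟩, hm1, hm2⟩ := hn
    obtain ⟨h1, h2⟩ := lt_of_le_div_aux hx hpx hm2
    have hmp : m < p := by exact_mod_cast h1.trans hpx
    simp only [Pfac_mul_aux hp hm1 hmp, Nat.mul_div_cancel_left m hp.pos]
  · intro n hn
    simp only [Finset.mem_filter, Finset.mem_Icc] at hn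
    obtain ⟨⟨hn1, hn2⟩, hn3⟩ := hn
    have hn4 : ¬ n ≤ 1 := by
      intro h
      rw [Pfac, if_pos h] at hn3
      norm_num at hn3
      linarith
    obtain ⟨hP, hd⟩ := Pfac_spec hn4
    have hle := Nat.le_of_dvd (by omega) hd
    have hnx : (n : ℝ) ≤ x := (Nat.le_floor_iff (by linarith)).1 hn2
    have hq : n / Pfac n ≤ ⌊x / (Pfac n : ℝ)⌋₊ := by
      apply Nat.le_floor
      rw [Nat.cast_div hd (by exact_mod_cast hP.ne_zero)]
      gcongr
    have hmp : n / Pfac n < Pfac n := by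
      exact_mod_cast (lt_of_le_div_aux hx hn3 hq).1.trans hn3
    rw [← rmf_mul_aux hf ω hP (Nat.div_pos hle hP.pos) hmp, Nat.mul_div_cancel' hd]

lemma rmf_ae {Ω : Type*} [MeasurableSpace Ω] {μ : Measure Ω} [IsProbabilityMeasure μ]
    {f : Ω → ℕ → ℝ} (hf : IsRademacherRMF μ f) {p : ℕ} (hp : p.Prime) :
    ∀ᵐ ω ∂μ, f ω p = 1 ∨ f ω p = -1 := by
  have m1 : MeasurableSet {ω | f ω p = 1} := hf.meas p (measurableSet_singleton 1)
  have m2 : MeasurableSet {ω | f ω p = -1} := hf.meas p (measurableSet_singleton (-1))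
  have hd : Disjoint {ω | f ω p = 1} {ω | f ω p = -1} := by
    rw [Set.disjoint_left]
    intro ω h1 h2
    simp only [Set.mem_ofPred_eq] at h1 h2
    rw [h1] at h2
    norm_num at h2
  have h : μ ({ω | f ω p = 1} ∪ {ω | f ω p = -1}) = 1 := by
    rw [measure_union hd m2, hf.prob_one p hp, hf.prob_neg_one p hp]
    exact ENNReal.add_halves 1
  exact (prob_compl_eq_zero_iff (m1.union m2)).2 h

lemma rmf_subG {Ω : Type*} [MeasurableSpace Ω] {μ : Measure Ω} [IsProbabilityMeasure μ]
    {f : Ω → ℕ → ℝ} (hf : IsRademacherRMF μ f) {p : ℕ} (hp : p.Prime) :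
    HasSubgaussianMGF (fun ω => f ω p) 1 μ := by
  have m1 : MeasurableSet {ω | f ω p = 1} := hf.meas p (measurableSet_singleton 1)
  have hI : ∫ ω, f ω p ∂μ = 0 := by
    have h1 : (fun ω => f ω p) =ᵐ[μ]
        fun ω => 2 * Set.indicator {ω | f ω p = 1} (fun _ => (1 : ℝ)) ω - 1 := by
      filter_upwards [rmf_ae hf hp] with ω hω
      rcases hω with h | h <;> simp [Set.indicator, h] <;> norm_num
    rw [integral_congr_ae h1, integral_sub _ (integrable_const _), integral_const_mul,
      integral_indicator_const _ m1]
    · simp [Measure.real, hf.prob_one p hp]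
    · exact ((integrable_const _).indicator m1).const_mul _
  have := hasSubgaussianMGF_of_mem_Icc_of_integral_eq_zero (μ := μ) (X := fun ω => f ω p)
    (a := -1) (b := 1) (hf.meas p).aemeasurable
    (by filter_upwards [rmf_ae hf hp] with ω hω
        rcases hω with h | h <;> simp [h]) hI
  convert this using 1
  ext
  push_cast
  norm_num

lemma rmf_hoeffding_one {Ω : Type*} [MeasurableSpace Ω] {μ : Measure Ω} [IsProbabilityMeasure μ]
    {f : Ω → ℕ → ℝ} (hf : IsRademacherRMF μ f) (S : Finset ℕ) (hS : ∀ p ∈ S, p.Prime)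
    (c : ℕ → ℝ) {lam : ℝ} (hlam : 0 < lam) :
    μ.real {ω | lam ≤ ∑ p ∈ S, f ω p * c p} ≤
      Real.exp (-(lam ^ 2) / (2 * ∑ p ∈ S, c p ^ 2)) := by
  have hind : iIndepFun (fun (p : Nat.Primes) (ω : Ω) => c p * f ω p) μ :=
    hf.indep.comp (fun p y => c p * y) (fun p => measurable_const_mul _)
  have h := HasSubgaussianMGF.measure_sum_ge_le_of_iIndepFun hind
    (s := S.subtype Nat.Prime) (fun p _ => (rmf_subG hf p.2).const_mul (c p)) hlam.le
  have e1 : ∀ ω, ∑ p ∈ S.subtype Nat.Prime, c p * f ω p = ∑ p ∈ S, f ω p * c p := by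
    intro ω
    rw [Finset.sum_subtype_of_mem (fun p => c p * f ω p) hS]
    simp_rw [mul_comm]
  have e2 : ∑ p ∈ S.subtype Nat.Prime, c p ^ 2 = ∑ p ∈ S, c p ^ 2 :=
    Finset.sum_subtype_of_mem (fun p => c p ^ 2) hS
  rw [← e2]
  have e3 : {ω | lam ≤ ∑ p ∈ S, f ω p * c p} =
      {ω | lam ≤ ∑ p ∈ S.subtype Nat.Prime, c p * f ω p} := by
    ext ω
    rw [Set.mem_ofPred_eq, Set.mem_ofPred_eq, e1]
  rw [e3]
  refine h.trans (le_of_eq ?_)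
  congr 3
  refine (NNReal.coe_sum _ _).trans ?_
  refine Finset.sum_congr rfl fun p _ => ?_
  change c p ^ 2 * 1 = c p ^ 2
  rw [mul_one]

lemma rmf_hoeffding {Ω : Type*} [MeasurableSpace Ω] {μ : Measure Ω} [IsProbabilityMeasure μ]
    {f : Ω → ℕ → ℝ} (hf : IsRademacherRMF μ f) (S : Finset ℕ) (hS : ∀ p ∈ S, p.Prime)
    (c : ℕ → ℝ) {lam : ℝ} (hlam : 0 < lam) :
    μ.real {ω | lam ≤ |∑ p ∈ S, f ω p * c p|} ≤
      2 * Real.exp (-(lam ^ 2) / (2 * ∑ p ∈ S, c p ^ 2)) := by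
  have h1 := rmf_hoeffding_one hf S hS c hlam
  have h2 := rmf_hoeffding_one hf S hS (fun p => - c p) hlam
  simp only [neg_sq, mul_neg, Finset.sum_neg_distrib] at h2
  have : {ω | lam ≤ |∑ p ∈ S, f ω p * c p|} =
      {ω | lam ≤ ∑ p ∈ S, f ω p * c p} ∪ {ω | lam ≤ -∑ p ∈ S, f ω p * c p} := by
    ext ω
    simp [le_abs]
  rw [this]
  have := measureReal_union_le (μ := μ) {ω | lam ≤ ∑ p ∈ S, f ω p * c p}
    {ω | lam ≤ -∑ p ∈ S, f ω p * c p}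
  linarith

/-- The sigma-algebra generated by the large primes. -/
def bigAlg {Ω : Type*} (f : Ω → ℕ → ℝ) (x : ℝ) : MeasurableSpace Ω :=
  ⨆ p ∈ {p : Nat.Primes | Real.sqrt x < ((p : ℕ) : ℝ)},
      MeasurableSpace.comap (fun ω => f ω (p : ℕ)) (inferInstance : MeasurableSpace ℝ)

lemma rmf_indep {Ω : Type*} [MeasurableSpace Ω] {μ : Measure Ω} [IsProbabilityMeasure μ]
    {f : Ω → ℕ → ℝ} (hf : IsRademacherRMF μ f) (x : ℝ) :
    Indep (bigAlg f x)
      (sigmaAlgSqrt f x) μ := by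
  have h := (iIndepFun_iff_iIndep _ _ _).1 hf.indep
  have h2 := indep_iSup_of_disjoint (fun p : Nat.Primes => (hf.meas p).comap_le) h
    (S := {p : Nat.Primes | Real.sqrt x < ((p : ℕ) : ℝ)})
    (T := {p : Nat.Primes | ((p : ℕ) : ℝ) ≤ Real.sqrt x})
    (by rw [Set.disjoint_left]; intro p hp hp'
        rw [Set.mem_ofPred_eq] at hp hp'
        linarith)
  refine indep_of_indep_of_le_right h2 ?_
  rw [sigmaAlgSqrt]
  refine iSup₂_le fun p hp => ?_
  exact le_iSup₂_of_le (⟨p, hp.1⟩ : Nat.Primes) hp.2 le_rfl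

/-- The multiplicative function with prescribed signs. -/
def signFun (T : Finset ℕ) (m : ℕ) : ℝ :=
  if Squarefree m then ∏ q ∈ m.primeFactors, (if q ∈ T then 1 else -1) else 0

/-- The conditional expectation is constant on cylinder events. -/
lemma condExp_on_cylinder {Ω : Type*} [mΩ : MeasurableSpace Ω] (μ : Measure Ω) [IsProbabilityMeasure μ]
    (f : Ω → ℕ → ℝ) (hf : IsRademacherRMF μ f) (x : ℝ) (hx : 4 ≤ x)
    (lam : ℝ) (T : Finset ℕ) :
    ∀ᵐ ω ∂μ, (∀ q : ℕ, q.Prime → (q : ℝ) ≤ Real.sqrt x → f ω q = if q ∈ T then 1 else -1) →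
      (μ[Set.indicator {ω' | lam ≤ |Mrad f ω' x|} (fun _ => (1 : ℝ))|sigmaAlgSqrt f x]) ω =
        μ.real {ω' | lam ≤ |∑ p ∈ (Finset.Icc 1 ⌊x⌋₊).filter
          (fun p : ℕ => Nat.Prime p ∧ Real.sqrt x < (p : ℝ)),
            f ω' p * ∑ m ∈ Finset.Icc 1 ⌊x / (p : ℝ)⌋₊, signFun T m|} ∧
      Vrad f ω x = ∑ p ∈ (Finset.Icc 1 ⌊x⌋₊).filter
          (fun p : ℕ => Nat.Prime p ∧ Real.sqrt x < (p : ℝ)),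
            (∑ m ∈ Finset.Icc 1 ⌊x / (p : ℝ)⌋₊, signFun T m) ^ 2 := by
  set S := (Finset.Icc 1 ⌊x⌋₊).filter
    (fun p : ℕ => Nat.Prime p ∧ Real.sqrt x < (p : ℝ)) with hSdef
  set c : ℕ → ℝ := fun p => ∑ m ∈ Finset.Icc 1 ⌊x / (p : ℝ)⌋₊, signFun T m with hc
  set E : Set Ω := {ω | ∀ q : ℕ, q.Prime → (q : ℝ) ≤ Real.sqrt x →
    f ω q = if q ∈ T then 1 else -1} with hE
  set A : Set Ω := {ω' | lam ≤ |Mrad f ω' x|} with hA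
  set B : Set Ω := {ω' | lam ≤ |∑ p ∈ S, f ω' p * c p|} with hB
  have hle : sigmaAlgSqrt f x ≤ mΩ :=
    iSup₂_le fun p _ => (hf.meas p).comap_le
  have hcE : ∀ ω ∈ E, ∀ p ∈ S, ∑ m ∈ Finset.Icc 1 ⌊x / (p : ℝ)⌋₊, f ω m = c p := by
    intro ω hω p hp
    refine Finset.sum_congr rfl fun m hm => ?_
    rw [Finset.mem_Icc] at hm
    have hpx := (Finset.mem_filter.1 hp).2.2
    obtain ⟨h1, -⟩ := lt_of_le_div_aux hx hpx hm.2
    rw [signFun]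
    split_ifs with hs
    · rw [hf.eq_prod_of_squarefree ω m hs]
      refine Finset.prod_congr rfl fun q hq => ?_
      rw [hω q (Nat.prime_of_mem_primeFactors hq)]
      have : (q : ℝ) ≤ m := by
        exact_mod_cast Nat.le_of_dvd (by omega) (Nat.dvd_of_mem_primeFactors hq)
      linarith
    · exact hf.eq_zero_of_not_squarefree ω m hs
  have hEm : MeasurableSet[sigmaAlgSqrt f x] E := by
    have : E = ⋂ q : ℕ, ⋂ _ : q.Prime, ⋂ _ : (q : ℝ) ≤ Real.sqrt x,
        (fun ω => f ω q) ⁻¹' {if q ∈ T then 1 else -1} := by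
      ext ω; simp [hE]
    rw [this]
    refine MeasurableSet.iInter fun q => MeasurableSet.iInter fun hq =>
      MeasurableSet.iInter fun hqx => ?_
    have hq2 : MeasurableSpace.comap (fun ω => f ω q) (inferInstance : MeasurableSpace ℝ) ≤
        sigmaAlgSqrt f x := le_iSup₂_of_le q ⟨hq, hqx⟩ le_rfl
    exact hq2 _ ⟨_, measurableSet_singleton _, rfl⟩
  have hAm : MeasurableSet A := by
    have : Measurable fun ω => Mrad f ω x :=
      Finset.measurable_sum _ fun n _ => hf.meas n
    exact measurableSet_le measurable_const this.abs
  have hle1 : bigAlg f x ≤ mΩ :=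
    iSup₂_le fun p _ => (hf.meas p).comap_le
  have hBm : MeasurableSet[bigAlg f x] B := by
    have : Measurable[bigAlg f x] fun ω => ∑ p ∈ S, f ω p * c p := by
      refine Finset.measurable_sum _ fun p hp => ?_
      have hp2 := (Finset.mem_filter.1 hp).2
      have h3 : MeasurableSpace.comap (fun ω => f ω p) (inferInstance : MeasurableSpace ℝ) ≤
        bigAlg f x := le_iSup₂_of_le (⟨p, hp2.1⟩ : Nat.Primes) hp2.2 le_rfl
      have h4 : Measurable[bigAlg f x] fun ω => f ω p := measurable_iff_comap_le.2 h3
      exact (measurable_mul_const (c p)).comp h4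
    exact (_root_.measurable_abs.comp this) measurableSet_Ici
  have hAB : E.indicator (A.indicator fun _ => (1 : ℝ)) =
      E.indicator (B.indicator fun _ => (1 : ℝ)) := by
    ext ω
    by_cases hω : ω ∈ E
    · simp only [Set.indicator_of_mem hω]
      have : ω ∈ A ↔ ω ∈ B := by
        simp only [hA, hB, Set.mem_ofPred_eq]
        rw [Mrad_eq hf ω hx, Finset.sum_congr rfl fun p hp => by rw [hcE ω hω p hp]]
      by_cases h : ω ∈ A
      · rw [Set.indicator_of_mem h, Set.indicator_of_mem (this.1 h)]
      · rw [Set.indicator_of_notMem h, Set.indicator_of_notMem (fun h' => h (this.2 h'))]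
    · simp [hω]
  have i1 : Integrable (A.indicator fun _ => (1 : ℝ)) μ := (integrable_const _).indicator hAm
  have i2 : Integrable (B.indicator fun _ => (1 : ℝ)) μ :=
    (integrable_const _).indicator (hle1 _ hBm)
  have e1 := condExp_indicator i1 hEm
  have e2 := condExp_indicator i2 hEm
  have e3 := condExp_indep_eq (μ := μ) (f := B.indicator fun _ => (1 : ℝ)) hle1 hle
    (stronglyMeasurable_const.indicator hBm) (rmf_indep hf x)
  rw [hAB] at e1
  filter_upwards [e1, e2, e3] with ω h1 h2 h3 hω
  refine ⟨?_, ?_⟩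
  · rw [h1] at h2
    rw [Set.indicator_of_mem (show ω ∈ E from hω), Set.indicator_of_mem (show ω ∈ E from hω)] at h2
    rw [h2, h3, integral_indicator_const _ (hle1 _ hBm)]
    simp
  · rw [Vrad]
    exact Finset.sum_congr rfl fun p hp => by rw [hcE ω hω p hp]

/-- Conditional Hoeffding bound: almost surely,
`ℙ(|M_f(x)| ≥ λ | 𝓕(√x)) ≤ 2 exp(-λ²/(2 V(x)))`, and on `{V(x) = 0}` the left-hand
side vanishes. -/
theorem conditional_hoeffding_rademacher
    {Ω : Type*} [MeasurableSpace Ω] (μ : Measure Ω) [IsProbabilityMeasure μ]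
    (f : Ω → ℕ → ℝ) (hf : IsRademacherRMF μ f) (x : ℝ) (hx : 4 ≤ x)
    (lam : ℝ) (hlam : 0 < lam) :
    ∀ᵐ ω ∂μ,
      (μ[Set.indicator {ω' | lam ≤ |Mrad f ω' x|} (fun _ => (1 : ℝ))|sigmaAlgSqrt f x]) ω ≤
          2 * Real.exp (-(lam ^ 2) / (2 * Vrad f ω x)) ∧
      (Vrad f ω x = 0 →
        (μ[Set.indicator {ω' | lam ≤ |Mrad f ω' x|} (fun _ => (1 : ℝ))|sigmaAlgSqrt f x]) ω
          = 0) := by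
  set A := (Finset.Icc 1 ⌊Real.sqrt x⌋₊) with hA
  have h1 : ∀ᵐ ω ∂μ, ∀ T : Finset ℕ, _ := ae_all_iff.2 fun T =>
    condExp_on_cylinder μ f hf x hx lam T
  have h2 : ∀ᵐ ω ∂μ, ∀ p : ℕ, p.Prime → (f ω p = 1 ∨ f ω p = -1) :=
    ae_all_iff.2 fun p => by
      by_cases hp : p.Prime
      · filter_upwards [rmf_ae hf hp] with ω hω _ using hω
      · exact Filter.Eventually.of_forall fun ω h => absurd h hp
  filter_upwards [h1, h2] with ω h1 h2
  classical
  obtain ⟨e1, e2⟩ := h1 (A.filter fun q => f ω q = 1) (by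
    intro q hq hqx
    have hqA : q ∈ A := Finset.mem_Icc.2 ⟨hq.one_le, Nat.le_floor hqx⟩
    rcases h2 q hq with h | h
    · simp [hqA, h]
    · have : ¬ ((-1 : ℝ) = 1) := by norm_num
      simp [h, this])
  rw [e1, e2]
  refine ⟨rmf_hoeffding hf _ (fun p hp => (Finset.mem_filter.1 hp).2.1)
    (fun p => ∑ m ∈ Finset.Icc 1 ⌊x / (p : ℝ)⌋₊, signFun (A.filter fun q => f ω q = 1) m) hlam, ?_⟩
  intro h0
  rw [Finset.sum_eq_zero_iff_of_nonneg (fun p _ => sq_nonneg _)] at h0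
  have : ∀ ω', ∑ p ∈ (Finset.Icc 1 ⌊x⌋₊).filter
      (fun p : ℕ => Nat.Prime p ∧ Real.sqrt x < (p : ℝ)),
      f ω' p * ∑ m ∈ Finset.Icc 1 ⌊x / (p : ℝ)⌋₊,
        signFun (A.filter fun q => f ω q = 1) m = 0 := by
    intro ω'
    refine Finset.sum_eq_zero fun p hp => ?_
    rw [pow_eq_zero_iff (two_ne_zero) |>.1 (h0 p hp), mul_zero]
  simp [this, not_le.2 hlam]
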